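/- Under the Entropy Setup, for all ρ > 0 and m ∈ ℝ with u = m/ρ, one has −q̌(ρ,m) + m(η̌_ρ(ρ,m) + u η̌_m(ρ,m)) ≤ 0. -/

import Mathlib

open MeasureTheory Real Set

noncomputable section

/-- The Lions–Perthame–Tadmor weak entropy
`η̌(ρ,m) = ∫_ℝ ½ s|s| [ρ^{2θ} − (m/ρ−s)²]_+^{(3−γ)/(2(γ−1))} ds`, with `2θ = γ−1`. -/
def etaCheck (γ ρ m : ℝ) : ℝ :=
  ∫ s : ℝ, (1/2) * s * |s| *
    (max (ρ ^ (γ - 1) - (m / ρ - s) ^ (2:ℕ)) 0) ^ ((3 - γ) / (2 * (γ - 1)))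

/-- The associated weak entropy flux
`q̌(ρ,m) = ∫_ℝ ½ s|s| (θs + (1−θ)m/ρ) [ρ^{2θ} − (m/ρ−s)²]_+^{(3−γ)/(2(γ−1))} ds`. -/
def qCheck (γ ρ m : ℝ) : ℝ :=
  ∫ s : ℝ, (1/2) * s * |s| * (((γ - 1)/2) * s + (1 - (γ - 1)/2) * (m / ρ)) *
    (max (ρ ^ (γ - 1) - (m / ρ - s) ^ (2:ℕ)) 0) ^ ((3 - γ) / (2 * (γ - 1)))

/-- Partial derivative `η̌_ρ` in the variables `(ρ,m)`. -/
def etaCheckRho (γ ρ m : ℝ) : ℝ := deriv (fun x => etaCheck γ x m) ρ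

/-- Partial derivative `η̌_m` in the variables `(ρ,m)`. -/
def etaCheckM (γ ρ m : ℝ) : ℝ := deriv (fun y => etaCheck γ ρ y) m

/-- The modified entropy `η̃(ρ,m) = η̌(ρ,m) − η̌_ρ(ρ̄,0)(ρ−ρ̄) − η̌_m(ρ̄,0)m`. -/
def etaTilde (γ ρbar ρ m : ℝ) : ℝ :=
  etaCheck γ ρ m - etaCheckRho γ ρbar 0 * (ρ - ρbar) - etaCheckM γ ρbar 0 * m

/-- The modified entropy flux
`q̃(ρ,m) = q̌(ρ,m) − η̌_ρ(ρ̄,0)m − η̌_m(ρ̄,0)(m²/ρ + p(ρ))`, `p(ρ) = κρ^γ`. -/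
def qTilde (γ κ ρbar ρ m : ℝ) : ℝ :=
  qCheck γ ρ m - etaCheckRho γ ρbar 0 * m
    - etaCheckM γ ρbar 0 * (m ^ (2:ℕ) / ρ + κ * ρ ^ γ)

/-- `η̃_ρ` in the variables `(ρ,m)`. -/
def etaTildeRho (γ ρbar ρ m : ℝ) : ℝ := deriv (fun x => etaTilde γ ρbar x m) ρ

/-- `η̃_m` in the variables `(ρ,m)`. -/
def etaTildeM (γ ρbar ρ m : ℝ) : ℝ := deriv (fun y => etaTilde γ ρbar ρ y) m

/-!
Put `θ = (γ - 1)/2`, `c = ρ^θ` and `s = u + ct`: the kinetic integrals become integrals against the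
even measure `[1 - t²]_+^λ dt`, and `η̌ = ρ ∫ ½ s|s|`. The combination `η̌_ρ + u η̌_m` is the
derivative of `η̌` along the ray `m = uρ`, on which `u` is fixed and only `c` varies; this uses that
`η̌` is totally differentiable, which holds because `f ↦ ∫ ½ f|f|` has gradient `|f|` on `L²`. One
finds `-q̌ + m(η̌_ρ + u η̌_m) = (θ/2) ρ c ∫ |u + ct|(u - ct)t`, and pairing `t` with `-t` makes the
integrand nonpositive, since `|a|b ≤ |b|a` whenever `b ≤ a`.
-/

section SignedSquare

lemma abs_half_mul_abs_sub_le (s h : ℝ) :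
    |1 / 2 * (s + h) * |s + h| - 1 / 2 * s * |s| - |s| * h| ≤ h ^ 2 / 2 := by
  rcases abs_cases s with ⟨hs, hs'⟩ | ⟨hs, hs'⟩ <;>
  rcases abs_cases (s + h) with ⟨hsh, hsh'⟩ | ⟨hsh, hsh'⟩ <;>
  rw [hs, hsh, abs_le] <;> constructor <;> nlinarith

variable {α : Type*} [MeasurableSpace α] {μ : Measure α}

lemma integrable_half_mul_abs_of_memLp_two {f : α → ℝ} (hf : MemLp f 2 μ) :
    Integrable (fun x => 1 / 2 * f x * |f x|) μ :=
  ((hf.integrable_mul hf.abs).const_mul (1 / 2)).congr (.of_forall fun _ => (mul_assoc ..).symm)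

lemma abs_integral_half_mul_abs_sub_sub_inner_le (f g : Lp ℝ 2 μ) :
    |∫ x, 1 / 2 * g x * |g x| ∂μ - ∫ x, 1 / 2 * f x * |f x| ∂μ - inner ℝ |f| (g - f)| ≤
      1 / 2 * ‖g - f‖ ^ 2 := by
  have hinner : inner ℝ |f| (g - f) = ∫ x, |f x| * (g x - f x) ∂μ := by
    rw [L2.inner_def]
    refine integral_congr_ae ?_
    filter_upwards [Lp.coeFn_abs f, Lp.coeFn_sub g f] with x habs hsub
    rw [habs, hsub, Pi.sub_apply, RCLike.inner_apply', conj_trivial]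
  have hnorm : ‖g - f‖ ^ 2 = ∫ x, (g x - f x) ^ 2 ∂μ := by
    rw [← real_inner_self_eq_norm_sq, L2.inner_def]
    refine integral_congr_ae ?_
    filter_upwards [Lp.coeFn_sub g f] with x hsub
    rw [hsub, Pi.sub_apply, real_inner_self_eq_norm_sq, Real.norm_eq_abs, sq_abs]
  have hf := Lp.memLp f
  have hg := Lp.memLp g
  have hf_int := integrable_half_mul_abs_of_memLp_two hf
  have hg_int := integrable_half_mul_abs_of_memLp_two hg
  have hinner_int : Integrable (fun x => |f x| * (g x - f x)) μ :=
    hf.abs.integrable_mul (hg.sub hf)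
  rw [hinner, hnorm, ← integral_sub hg_int hf_int, ← integral_sub (hg_int.sub' hf_int) hinner_int,
    ← integral_const_mul, ← Real.norm_eq_abs]
  refine norm_integral_le_of_norm_le ((hg.sub hf).integrable_sq.const_mul _)
    (.of_forall fun x => ?_)
  simpa [div_eq_inv_mul] using abs_half_mul_abs_sub_le (f x) (g x - f x)

theorem hasGradientAt_integral_half_mul_abs (f : Lp ℝ 2 μ) :
    HasGradientAt (fun g : Lp ℝ 2 μ => ∫ x, 1 / 2 * g x * |g x| ∂μ) |f| f := by
  rw [hasGradientAt_iff_isLittleO]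
  refine Asymptotics.IsBigO.trans_isLittleO (g := fun g => ‖g - f‖ ^ 2) ?_
    (Asymptotics.isLittleO_pow_sub_sub f one_lt_two)
  refine .of_bound (1 / 2) (.of_forall fun g => ?_)
  simpa using abs_integral_half_mul_abs_sub_sub_inner_le f g

end SignedSquare

section Moment

/-- The moment `∫ ½ s|s| dμ(t)` over the affine line `s = u + ct`: up to the factor `ρ`, the value
of `η̌` at velocity `u` and density `ρ` with `c = ρ^θ`, if `μ` is the kinetic profile. -/
def signedSquareMoment (μ : Measure ℝ) (u c : ℝ) : ℝ :=
  ∫ t, 1 / 2 * (u + c * t) * |u + c * t| ∂μ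

variable {μ : Measure ℝ} [IsFiniteMeasure μ]

/-- The affine functions `t ↦ u + ct` as elements of `L²(μ)`, depending linearly on `(u, c)`. -/
def affineLp (hμ : MemLp id 2 μ) : ℝ × ℝ →L[ℝ] Lp ℝ 2 μ :=
  (ContinuousLinearMap.fst ℝ ℝ ℝ).smulRight (Lp.const 2 μ (1 : ℝ)) +
    (ContinuousLinearMap.snd ℝ ℝ ℝ).smulRight (hμ.toLp id)

lemma coeFn_affineLp (hμ : MemLp id 2 μ) (p : ℝ × ℝ) :
    affineLp hμ p =ᵐ[μ] fun t => p.1 + p.2 * t := by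
  refine (Lp.coeFn_add (p.1 • Lp.const 2 μ (1 : ℝ)) (p.2 • hμ.toLp id)).trans ?_
  filter_upwards [Lp.coeFn_smul p.1 (Lp.const 2 μ (1 : ℝ)), Lp.coeFn_smul p.2 (hμ.toLp id),
    Lp.coeFn_const 2 μ (1 : ℝ), hμ.coeFn_toLp] with t hconst_smul hid_smul hconst hid
  rw [Pi.add_apply, hconst_smul, hid_smul, Pi.smul_apply, Pi.smul_apply, hconst, hid]
  simp

lemma signedSquareMoment_eq_integral_affineLp (hμ : MemLp id 2 μ) (p : ℝ × ℝ) :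
    signedSquareMoment μ p.1 p.2 =
      ∫ t, 1 / 2 * affineLp hμ p t * |affineLp hμ p t| ∂μ := by
  refine integral_congr_ae ?_
  filter_upwards [coeFn_affineLp hμ p] with t ht
  rw [ht]

lemma hasFDerivAt_signedSquareMoment (hμ : MemLp id 2 μ) (p : ℝ × ℝ) :
    HasFDerivAt (fun p : ℝ × ℝ => signedSquareMoment μ p.1 p.2)
      ((innerSL ℝ |affineLp hμ p|).comp (affineLp hμ)) p := by
  rw [funext (signedSquareMoment_eq_integral_affineLp hμ)]
  exact (hasGradientAt_integral_half_mul_abs (affineLp hμ p)).hasFDerivAt.comp p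
    (affineLp hμ).hasFDerivAt

lemma hasDerivAt_signedSquareMoment (hμ : MemLp id 2 μ) (u c : ℝ) :
    HasDerivAt (signedSquareMoment μ u) (∫ t, |u + c * t| * t ∂μ) c := by
  have hderiv := (hasFDerivAt_signedSquareMoment hμ (u, c)).comp_hasDerivAt c
    ((hasDerivAt_const c u).prodMk (hasDerivAt_id c))
  refine hderiv.congr_deriv ?_
  rw [ContinuousLinearMap.comp_apply, innerSL_apply_apply, L2.inner_def]
  refine integral_congr_ae ?_
  filter_upwards [Lp.coeFn_abs (affineLp hμ (u, c)), coeFn_affineLp hμ (u, c),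
    coeFn_affineLp hμ (0, 1)] with t habs hline hid
  rw [habs, hline, hid, RCLike.inner_apply', conj_trivial, zero_add, one_mul]

end Moment

section Symmetrization

lemma abs_mul_le_abs_mul_of_le {a b : ℝ} (hab : b ≤ a) : |a| * b ≤ |b| * a := by
  rcases abs_cases a with ⟨ha, ha'⟩ | ⟨ha, ha'⟩ <;>
  rcases abs_cases b with ⟨hb, hb'⟩ | ⟨hb, hb'⟩ <;>
  rw [ha, hb] <;> nlinarith

lemma integral_nonpos_of_add_comp_neg_nonpos {G : Type*} [MeasurableSpace G] [AddGroup G]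
    [MeasurableNeg G] {μ : Measure G} [μ.IsNegInvariant] {f : G → ℝ} (hf : Integrable f μ)
    (hf_neg : ∀ x, f x + f (-x) ≤ 0) : ∫ x, f x ∂μ ≤ 0 := by
  have hsum : ∫ x, f x ∂μ + ∫ x, f x ∂μ ≤ 0 := by
    nth_rw 2 [← integral_neg_eq_self]
    rw [← integral_add hf hf.comp_neg]
    exact integral_nonpos hf_neg
  linarith

lemma integral_abs_add_mul_sub_mul_nonpos {μ : Measure ℝ} [μ.IsNegInvariant] {u c : ℝ}
    (hc : 0 ≤ c) (hint : Integrable (fun t => |u + c * t| * (u - c * t) * t) μ) :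
    ∫ t, |u + c * t| * (u - c * t) * t ∂μ ≤ 0 := by
  refine integral_nonpos_of_add_comp_neg_nonpos hint fun t => ?_
  rw [mul_neg c t, sub_neg_eq_add, ← sub_eq_add_neg]
  rcases le_total 0 t with ht | ht
  · have := abs_mul_le_abs_mul_of_le (a := u + c * t) (b := u - c * t) (by nlinarith)
    nlinarith
  · have := abs_mul_le_abs_mul_of_le (a := u - c * t) (b := u + c * t) (by nlinarith)
    nlinarith

end Symmetrization

section Barenblatt

lemma integrable_of_ae_mem_isCompact {X E : Type*} [TopologicalSpace X] [T2Space X]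
    [MeasurableSpace X] [OpensMeasurableSpace X] [NormedAddCommGroup E]
    [SecondCountableTopologyEither X E] {μ : Measure X} [IsFiniteMeasure μ] {K : Set X}
    (hK : IsCompact K) (hμK : ∀ᵐ x ∂μ, x ∈ K) {φ : X → E} (hφ : Continuous φ) :
    Integrable φ μ := by
  rw [← Measure.restrict_eq_self_of_ae_mem hμK]
  exact hφ.continuousOn.integrableOn_compact hK

lemma isNegInvariant_withDensity {G : Type*} [MeasurableSpace G] [InvolutiveNeg G]
    [MeasurableNeg G] {μ : Measure G} [μ.IsNegInvariant] {w : G → ENNReal}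
    (hw_even : ∀ x, w (-x) = w x) : (μ.withDensity w).IsNegInvariant := by
  refine ⟨Measure.ext fun s hs => ?_⟩
  rw [Measure.neg_apply, withDensity_apply _ hs.neg, withDensity_apply _ hs,
    ← lintegral_indicator hs.neg, ← lintegral_indicator hs, ← lintegral_neg_eq_self]
  refine lintegral_congr fun x => ?_
  by_cases hx : x ∈ s <;> simp [hx, hw_even]

/-- The even profile `[1 - t²]_+^l dt`, written as a density on `[-1, 1]` so that the case `l = 0`
gives the uniform measure there. -/
def barenblattMeasure (l : ℝ) : Measure ℝ :=
  (volume.restrict (Icc (-1) 1)).withDensity fun t => ENNReal.ofReal ((1 - t ^ 2) ^ l)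

instance isNegInvariant_barenblattMeasure (l : ℝ) : (barenblattMeasure l).IsNegInvariant := by
  rw [barenblattMeasure, ← withDensity_indicator measurableSet_Icc]
  refine isNegInvariant_withDensity fun t => ?_
  have hmem : -t ∈ Icc (-1 : ℝ) 1 ↔ t ∈ Icc (-1 : ℝ) 1 := by
    simp only [← abs_le, mem_Icc, abs_neg]
  by_cases ht : t ∈ Icc (-1 : ℝ) 1
  · rw [indicator_of_mem ht, indicator_of_mem (hmem.2 ht), neg_sq]
  · rw [indicator_of_notMem ht, indicator_of_notMem (mt hmem.1 ht)]

lemma ae_mem_Icc_barenblattMeasure (l : ℝ) : ∀ᵐ t ∂barenblattMeasure l, t ∈ Icc (-1 : ℝ) 1 :=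
  (withDensity_absolutelyContinuous _ _).ae_le (ae_restrict_mem measurableSet_Icc)

lemma intervalIntegrable_one_sub_sq_rpow {l : ℝ} (hl : -1 < l) :
    IntervalIntegrable (fun t : ℝ => (1 - t ^ 2) ^ l) volume (-1) 1 := by
  have hright : IntervalIntegrable (fun t : ℝ => (1 - t ^ 2) ^ l) volume 0 1 := by
    have hsing : IntervalIntegrable (fun t : ℝ => (1 - t) ^ l) volume 0 1 := by
      simpa using
        ((intervalIntegral.intervalIntegrable_rpow' (a := 0) (b := 1) hl).comp_sub_left 1).symm
    have hcont : ContinuousOn (fun t : ℝ => (1 + t) ^ l) (uIcc 0 1) := by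
      refine ContinuousOn.rpow_const (by fun_prop) fun t ht => Or.inl ?_
      rw [uIcc_of_le zero_le_one] at ht
      linarith [ht.1]
    refine (hsing.mul_continuousOn hcont).congr fun t ht => ?_
    rw [uIoc_of_le zero_le_one] at ht
    rw [← Real.mul_rpow (by linarith [ht.2]) (by linarith [ht.1])]
    congr 1
    ring
  have hleft := ((IntervalIntegrable.iff_comp_neg (by simp)).1 hright).symm
  simp only [neg_sq, neg_zero] at hleft
  exact hleft.trans hright

lemma isFiniteMeasure_barenblattMeasure {l : ℝ} (hl : -1 < l) :
    IsFiniteMeasure (barenblattMeasure l) := by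
  have hint : IntegrableOn (fun t : ℝ => (1 - t ^ 2) ^ l) (Icc (-1) 1) :=
    (intervalIntegrable_iff_integrableOn_Icc_of_le (by norm_num)).1
      (intervalIntegrable_one_sub_sq_rpow hl)
  exact isFiniteMeasure_withDensity_ofReal hint.2

lemma integral_barenblattMeasure {l : ℝ} (hl : l ≠ 0) (φ : ℝ → ℝ) :
    ∫ t, φ t ∂barenblattMeasure l = ∫ t, φ t * max (1 - t ^ 2) 0 ^ l := by
  rw [barenblattMeasure, integral_withDensity_eq_integral_toReal_smul (by fun_prop) (by simp),
    ← setIntegral_eq_integral_of_forall_compl_eq_zero (s := Icc (-1) 1)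
      (f := fun t => φ t * max (1 - t ^ 2) 0 ^ l)]
  · refine setIntegral_congr_fun measurableSet_Icc fun t ht => ?_
    have ht_sq : 0 ≤ 1 - t ^ 2 := by nlinarith [ht.1, ht.2]
    simp only [max_eq_left ht_sq, smul_eq_mul]
    rw [ENNReal.toReal_ofReal (Real.rpow_nonneg ht_sq l), mul_comm]
  · intro t ht
    have ht_sq : 1 - t ^ 2 ≤ 0 := by
      rw [mem_Icc, ← abs_le, ← sq_le_one_iff_abs_le_one] at ht
      linarith
    rw [max_eq_right ht_sq, Real.zero_rpow hl, mul_zero]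

lemma integral_mul_max_sq_sub_sq_rpow {l c : ℝ} (hl : l ≠ 0) (hc : 0 < c) (u : ℝ) (φ : ℝ → ℝ) :
    ∫ s, φ s * max (c ^ 2 - (u - s) ^ 2) 0 ^ l =
      c ^ (2 * l + 1) * ∫ t, φ (u + c * t) ∂barenblattMeasure l := by
  have hscale (t : ℝ) : max (c ^ 2 - (u - (u + c * t)) ^ 2) 0 ^ l =
      c ^ (2 * l) * max (1 - t ^ 2) 0 ^ l := by
    rw [Real.rpow_mul hc.le, Real.rpow_two, ← Real.mul_rpow (by positivity) (le_max_right _ _),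
      mul_max_of_nonneg _ _ (by positivity)]
    ring_nf
  calc ∫ s, φ s * max (c ^ 2 - (u - s) ^ 2) 0 ^ l
      = ∫ y, φ (u + y) * max (c ^ 2 - (u - (u + y)) ^ 2) 0 ^ l :=
        (integral_add_left_eq_self (fun s => φ s * max (c ^ 2 - (u - s) ^ 2) 0 ^ l) u).symm
    _ = c * ∫ t, φ (u + c * t) * max (c ^ 2 - (u - (u + c * t)) ^ 2) 0 ^ l := by
        rw [Measure.integral_comp_mul_left
          (fun y => φ (u + y) * max (c ^ 2 - (u - (u + y)) ^ 2) 0 ^ l) c,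
          abs_of_pos (inv_pos.2 hc), smul_eq_mul, mul_inv_cancel_left₀ hc.ne']
    _ = c ^ (2 * l + 1) * ∫ t, φ (u + c * t) * max (1 - t ^ 2) 0 ^ l := by
        simp only [hscale, mul_left_comm (φ _)]
        rw [integral_const_mul, Real.rpow_add_one hc.ne']
        ring
    _ = c ^ (2 * l + 1) * ∫ t, φ (u + c * t) ∂barenblattMeasure l := by
        rw [integral_barenblattMeasure hl]

end Barenblatt

section ChainRule

lemma deriv_left_add_mul_deriv_right {f : ℝ → ℝ → ℝ} {y : ℝ → ℝ} {a v : ℝ}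
    (hf : DifferentiableAt ℝ (fun p : ℝ × ℝ => f p.1 p.2) (a, y a)) (hy : HasDerivAt y v a) :
    deriv (fun x => f x (y a)) a + v * deriv (f a) (y a) = deriv (fun x => f x (y x)) a := by
  have hchain {g : ℝ → ℝ × ℝ} {g' : ℝ × ℝ} {t : ℝ} (hgt : g t = (a, y a))
      (hg : HasDerivAt g g' t) : deriv (fun x => f (g x).1 (g x).2) t =
        fderiv ℝ (fun p : ℝ × ℝ => f p.1 p.2) (a, y a) g' :=
    ((hgt ▸ hf).hasFDerivAt.comp_hasDerivAt t hg).deriv.trans (by rw [hgt])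
  have hleft : deriv (fun x => f x (y a)) a = _ :=
    hchain (g := fun x => (x, y a)) rfl ((hasDerivAt_id a).prodMk (hasDerivAt_const a (y a)))
  have hright : deriv (f a) (y a) = _ :=
    hchain rfl ((hasDerivAt_const (y a) a).prodMk (hasDerivAt_id (y a)))
  have hcurve : deriv (fun x => f x (y x)) a = _ :=
    hchain (g := fun x => (x, y x)) rfl ((hasDerivAt_id a).prodMk hy)
  rw [hleft, hright, hcurve, ← smul_eq_mul, ← map_smul, ← map_add]
  simp

end ChainRule

section Entropy

/-- The exponent `λ = (3 - γ)/(2(γ - 1))` of the entropy kernel. -/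
def kineticExponent (γ : ℝ) : ℝ := (3 - γ) / (2 * (γ - 1))

/-- The profile `[1 - t²]_+^λ dt` of the entropy kernel in the variable `t = (s - u)/ρ^θ`. -/
def kineticMeasure (γ : ℝ) : Measure ℝ := barenblattMeasure (kineticExponent γ)

variable {γ ρ : ℝ}

instance isNegInvariant_kineticMeasure : (kineticMeasure γ).IsNegInvariant :=
  isNegInvariant_barenblattMeasure _

lemma kineticExponent_ne_zero (hγ : 1 < γ) (hγ3 : γ ≠ 3) : kineticExponent γ ≠ 0 :=
  div_ne_zero (sub_ne_zero.2 hγ3.symm) (by linarith)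

lemma neg_one_lt_kineticExponent (hγ : 1 < γ) : -1 < kineticExponent γ := by
  rw [kineticExponent, lt_div_iff₀ (by linarith)]
  linarith

lemma isFiniteMeasure_kineticMeasure (hγ : 1 < γ) : IsFiniteMeasure (kineticMeasure γ) :=
  isFiniteMeasure_barenblattMeasure (neg_one_lt_kineticExponent hγ)

lemma integrable_kineticMeasure (hγ : 1 < γ) {φ : ℝ → ℝ} (hφ : Continuous φ) :
    Integrable φ (kineticMeasure γ) := by
  have : IsFiniteMeasure (barenblattMeasure (kineticExponent γ)) :=
    isFiniteMeasure_kineticMeasure hγ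
  exact integrable_of_ae_mem_isCompact isCompact_Icc (ae_mem_Icc_barenblattMeasure _) hφ

lemma memLp_id_kineticMeasure (hγ : 1 < γ) : MemLp id 2 (kineticMeasure γ) :=
  (memLp_two_iff_integrable_sq (by fun_prop)).2 (integrable_kineticMeasure hγ (by fun_prop))

lemma rpow_theta_rpow_two_mul_kineticExponent_add_one (hγ : 1 < γ) (hρ : 0 ≤ ρ) :
    (ρ ^ ((γ - 1) / 2)) ^ (2 * kineticExponent γ + 1) = ρ := by
  have hexp : (γ - 1) / 2 * (2 * kineticExponent γ + 1) = 1 := by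
    have : γ - 1 ≠ 0 := by linarith
    rw [kineticExponent]
    field_simp
    ring
  rw [← Real.rpow_mul hρ, hexp, Real.rpow_one]

lemma integral_mul_entropyKernel (hγ : 1 < γ) (hγ3 : γ ≠ 3) (hρ : 0 < ρ) (u : ℝ) (φ : ℝ → ℝ) :
    ∫ s, φ s * max (ρ ^ (γ - 1) - (u - s) ^ 2) 0 ^ ((3 - γ) / (2 * (γ - 1))) =
      ρ * ∫ t, φ (u + ρ ^ ((γ - 1) / 2) * t) ∂kineticMeasure γ := by
  have hsq : ρ ^ (γ - 1) = (ρ ^ ((γ - 1) / 2)) ^ 2 := by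
    rw [← Real.rpow_mul_natCast hρ.le, Nat.cast_ofNat, div_mul_cancel₀ _ two_ne_zero]
  have hsubst := integral_mul_max_sq_sub_sq_rpow (kineticExponent_ne_zero hγ hγ3)
    (Real.rpow_pos_of_pos hρ ((γ - 1) / 2)) u φ
  rwa [rpow_theta_rpow_two_mul_kineticExponent_add_one hγ hρ.le, ← hsq] at hsubst

lemma etaCheck_eq_mul_signedSquareMoment (hγ : 1 < γ) (hγ3 : γ ≠ 3) (hρ : 0 < ρ) (m : ℝ) :
    etaCheck γ ρ m =
      ρ * signedSquareMoment (kineticMeasure γ) (m / ρ) (ρ ^ ((γ - 1) / 2)) :=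
  integral_mul_entropyKernel hγ hγ3 hρ (m / ρ) fun s => 1 / 2 * s * |s|

lemma qCheck_mul_self_eq_mul_integral (hγ : 1 < γ) (hγ3 : γ ≠ 3) (hρ : 0 < ρ) (u : ℝ) :
    qCheck γ ρ (u * ρ) = ρ * ∫ t, 1 / 2 * (u + ρ ^ ((γ - 1) / 2) * t) *
      |u + ρ ^ ((γ - 1) / 2) * t| *
        ((γ - 1) / 2 * (u + ρ ^ ((γ - 1) / 2) * t) + (1 - (γ - 1) / 2) * u) ∂kineticMeasure γ := by
  rw [qCheck, mul_div_cancel_right₀ _ hρ.ne']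
  exact integral_mul_entropyKernel hγ hγ3 hρ u fun s =>
    1 / 2 * s * |s| * ((γ - 1) / 2 * s + (1 - (γ - 1) / 2) * u)

lemma differentiableAt_etaCheck (hγ : 1 < γ) (hγ3 : γ ≠ 3) (hρ : 0 < ρ) (m : ℝ) :
    DifferentiableAt ℝ (fun p : ℝ × ℝ => etaCheck γ p.1 p.2) (ρ, m) := by
  have := isFiniteMeasure_kineticMeasure hγ
  have hquot : DifferentiableAt ℝ (fun p : ℝ × ℝ => p.2 / p.1) (ρ, m) :=
    differentiableAt_snd.mul (differentiableAt_fst.inv hρ.ne')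
  have hpow : DifferentiableAt ℝ (fun p : ℝ × ℝ => p.1 ^ ((γ - 1) / 2)) (ρ, m) :=
    differentiableAt_fst.rpow_const (Or.inl hρ.ne')
  have hmoment : DifferentiableAt ℝ (fun p : ℝ × ℝ => p.1 *
      signedSquareMoment (kineticMeasure γ) (p.2 / p.1) (p.1 ^ ((γ - 1) / 2))) (ρ, m) :=
    differentiableAt_fst.mul
      ((hasFDerivAt_signedSquareMoment (memLp_id_kineticMeasure hγ) _).differentiableAt.comp (ρ, m)
        (hquot.prodMk hpow))
  refine hmoment.congr_of_eventuallyEq ?_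
  filter_upwards [continuousAt_fst.eventually (lt_mem_nhds hρ)] with p hp
  exact etaCheck_eq_mul_signedSquareMoment hγ hγ3 hp p.2

lemma hasDerivAt_etaCheck_along_ray (hγ : 1 < γ) (hγ3 : γ ≠ 3) (hρ : 0 < ρ) (u : ℝ) :
    HasDerivAt (fun r => etaCheck γ r (u * r))
      (signedSquareMoment (kineticMeasure γ) u (ρ ^ ((γ - 1) / 2)) +
        (γ - 1) / 2 * ρ ^ ((γ - 1) / 2) *
          ∫ t, |u + ρ ^ ((γ - 1) / 2) * t| * t ∂kineticMeasure γ) ρ := by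
  have := isFiniteMeasure_kineticMeasure hγ
  have hmoment := (hasDerivAt_id ρ).mul
    ((hasDerivAt_signedSquareMoment (memLp_id_kineticMeasure hγ) u _).comp ρ
      (Real.hasDerivAt_rpow_const (p := (γ - 1) / 2) (Or.inl hρ.ne')))
  refine (hmoment.congr_deriv ?_).congr_of_eventuallyEq ?_
  · simp only [id_eq, Function.comp_apply, Real.rpow_sub_one hρ.ne']
    field_simp
  · filter_upwards [lt_mem_nhds hρ] with r hr
    rw [etaCheck_eq_mul_signedSquareMoment hγ hγ3 hr, mul_div_cancel_right₀ _ hr.ne']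
    rfl

lemma etaCheckRho_add_mul_etaCheckM (hγ : 1 < γ) (hγ3 : γ ≠ 3) (hρ : 0 < ρ) (u : ℝ) :
    etaCheckRho γ ρ (u * ρ) + u * etaCheckM γ ρ (u * ρ) =
      signedSquareMoment (kineticMeasure γ) u (ρ ^ ((γ - 1) / 2)) +
        (γ - 1) / 2 * ρ ^ ((γ - 1) / 2) *
          ∫ t, |u + ρ ^ ((γ - 1) / 2) * t| * t ∂kineticMeasure γ :=
  (deriv_left_add_mul_deriv_right (differentiableAt_etaCheck hγ hγ3 hρ _)
    (by simpa using (hasDerivAt_id ρ).const_mul u)).trans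
    (hasDerivAt_etaCheck_along_ray hγ hγ3 hρ u).deriv

theorem neg_qCheck_add_eq_integral (hγ : 1 < γ) (hγ3 : γ ≠ 3) (hρ : 0 < ρ) (u : ℝ) :
    -qCheck γ ρ (u * ρ) + u * ρ * (etaCheckRho γ ρ (u * ρ) + u * etaCheckM γ ρ (u * ρ)) =
      (γ - 1) / 4 * ρ * ρ ^ ((γ - 1) / 2) *
        ∫ t, |u + ρ ^ ((γ - 1) / 2) * t| * (u - ρ ^ ((γ - 1) / 2) * t) * t ∂kineticMeasure γ := by
  rw [qCheck_mul_self_eq_mul_integral hγ hγ3 hρ, etaCheckRho_add_mul_etaCheckM hγ hγ3 hρ,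
    signedSquareMoment]
  generalize ρ ^ ((γ - 1) / 2) = c
  have hint {φ : ℝ → ℝ} (hφ : Continuous φ) : Integrable φ (kineticMeasure γ) :=
    integrable_kineticMeasure hγ hφ
  have hflux : ∫ t, 1 / 2 * (u + c * t) * |u + c * t| *
        ((γ - 1) / 2 * (u + c * t) + (1 - (γ - 1) / 2) * u) ∂kineticMeasure γ =
      u * ∫ t, 1 / 2 * (u + c * t) * |u + c * t| ∂kineticMeasure γ +
        (γ - 1) / 2 * c * ∫ t, 1 / 2 * (u + c * t) * |u + c * t| * t ∂kineticMeasure γ := by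
    rw [← integral_const_mul, ← integral_const_mul,
      ← integral_add (hint (by fun_prop)) (hint (by fun_prop))]
    congr with t
    ring
  have hdiff : u * ∫ t, |u + c * t| * t ∂kineticMeasure γ -
        ∫ t, 1 / 2 * (u + c * t) * |u + c * t| * t ∂kineticMeasure γ =
      1 / 2 * ∫ t, |u + c * t| * (u - c * t) * t ∂kineticMeasure γ := by
    rw [← integral_const_mul, ← integral_const_mul,
      ← integral_sub (hint (by fun_prop)) (hint (by fun_prop))]
    congr with t
    ring
  linear_combination -ρ * hflux + (γ - 1) / 2 * ρ * c * hdiff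

-- At `γ = 3` the exponent is `0` and `x ^ 0 = 1` also at `x = 0`: the kernel is `1` on all of `ℝ`.
lemma etaCheck_three (ρ m : ℝ) : etaCheck 3 ρ m = 0 := by
  have hodd : ∫ s : ℝ, 1 / 2 * s * |s| = -∫ s : ℝ, 1 / 2 * s * |s| := by
    rw [← integral_neg, ← integral_neg_eq_self]
    simp
  have hkernel : etaCheck 3 ρ m = ∫ s : ℝ, 1 / 2 * s * |s| := by simp [etaCheck]
  linarith

lemma qCheck_three_nonneg (ρ m : ℝ) : 0 ≤ qCheck 3 ρ m := by
  refine integral_nonneg fun s => ?_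
  have hflux : 1 / 2 * s * |s| * ((3 - 1) / 2 * s + (1 - (3 - 1) / 2) * (m / ρ)) =
      1 / 2 * s ^ 2 * |s| := by ring
  simp only [hflux]
  positivity

end Entropy

/-- `−q̌(ρ,m) + m(η̌_ρ(ρ,m) + u η̌_m(ρ,m)) ≤ 0` for all `ρ > 0`, `m ∈ ℝ`,
where `u = m/ρ`. -/
theorem qCheck_entropy_inequality (γ : ℝ) (hγ : 1 < γ) :
    ∀ ρ : ℝ, 0 < ρ → ∀ m : ℝ,
      -qCheck γ ρ m + m * (etaCheckRho γ ρ m + (m / ρ) * etaCheckM γ ρ m) ≤ 0 := by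
  intro ρ hρ m
  rcases eq_or_ne γ 3 with rfl | hγ3
  · simpa [etaCheckRho, etaCheckM, etaCheck_three] using qCheck_three_nonneg ρ m
  obtain ⟨u, rfl⟩ : ∃ u, m = u * ρ := ⟨m / ρ, (div_mul_cancel₀ m hρ.ne').symm⟩
  have hc : 0 ≤ ρ ^ ((γ - 1) / 2) := Real.rpow_nonneg hρ.le _
  rw [mul_div_cancel_right₀ u hρ.ne', neg_qCheck_add_eq_integral hγ hγ3 hρ]
  refine mul_nonpos_of_nonneg_of_nonpos ?_ (integral_abs_add_mul_sub_mul_nonpos hc ?_)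
  · have : 0 < γ - 1 := by linarith
    positivity
  · exact integrable_kineticMeasure hγ (by fun_prop)
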